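/- Let w be a word over Γ of odd length 2k−1 such that every letter of w in an even position (positions numbered from 1) equals s, and let w' be the word of length k consisting of the letters of w in odd positions. Then for every state (p, d) ∈ ℂ × ℂ, the turtle runs of w and w' from (p, d) have the same final direction e, and the final position of the run of w equals 2·(final position of the run of w') − p − e. In particular, deleting the letters s at even positions preserves the turning sequence and rescales the traversed path. -/

import Mathlib

/-!
Each pair of letters `a s` moves the turtle twice along the direction set by `a`, whereas `a` alone
moves it once; both leave the same direction. So peeling off such a pair advances the run of `w` by
twice the displacement of the run of `oddExtract w`, and the final letter, not followed by `s`,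
accounts for the correction `-e`. The induction in `run_oddExtract_aux` lets the two runs
start at independent positions, since they drift apart as letters are consumed.
-/

open Complex

/-- The boundary alphabet Γ = {L, R, s, v}. -/
inductive GammaLetter : Type
  | L | R | s | v
deriving DecidableEq

/-- The turn factor: ρ(L) = i, ρ(R) = -i, ρ(s) = 1, ρ(v) = -1. -/
noncomputable def rho : GammaLetter → ℂ
  | .L => I
  | .R => -I
  | .s => 1
  | .v => -1

/-- One turtle step: the letter x updates (p, d) by first d ↦ ρ(x)·d and then p ↦ p + d. -/
noncomputable def turtleStep (x : GammaLetter) (st : ℂ × ℂ) : ℂ × ℂ :=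
  (st.1 + rho x * st.2, rho x * st.2)

/-- The turtle run of a word from a state, processing letters left to right. -/
noncomputable def run (w : List GammaLetter) (st : ℂ × ℂ) : ℂ × ℂ :=
  w.foldl (fun st x => turtleStep x st) st

/-- The reduction table: RvR ↦ s, LvL ↦ s, RvL ↦ v, LvR ↦ v, svR ↦ L, svL ↦ R,
Rvs ↦ L, Lvs ↦ R, svs ↦ v.  (`Red X Y` is the value on the triple X v Y.) -/
def Red : GammaLetter → GammaLetter → GammaLetter
  | .R, .R => .s
  | .L, .L => .s
  | .R, .L => .v
  | .L, .R => .v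
  | .s, .R => .L
  | .s, .L => .R
  | .R, .s => .L
  | .L, .s => .R
  | .s, .s => .v
  | _, _ => .v

/-- Odd-position extraction: keep the letters at positions 1, 3, 5, …
(1-indexed), i.e. at even indices. -/
def oddExtract {α : Type*} : List α → List α
  | [] => []
  | [a] => [a]
  | a :: _ :: rest => a :: oddExtract rest

/-- Displacement form of the result for length `2 * n + 1`, with independent starting positions
`q` for `w` and `p` for the extracted word. -/
theorem run_oddExtract_aux (n : ℕ) (w : List GammaLetter) (hlen : w.length = 2 * n + 1)
    (hs : ∀ (i : ℕ) (h : i < w.length), Odd i → w[i] = GammaLetter.s) (q p d : ℂ) :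
    (oddExtract w).length = n + 1 ∧
    (run w (q, d)).2 = (run (oddExtract w) (p, d)).2 ∧
    (run w (q, d)).1 - q =
      2 * ((run (oddExtract w) (p, d)).1 - p) - (run (oddExtract w) (p, d)).2 := by
  induction n generalizing w q p d with
  | zero =>
    obtain ⟨a, rfl⟩ := List.length_eq_one_iff.mp hlen
    refine ⟨rfl, rfl, ?_⟩
    simp only [oddExtract, run, turtleStep, List.foldl]
    ring
  | succ n ih =>
    match w, hlen, hs with
    | [], hlen, _ => simp at hlen
    | [_], hlen, _ => simp at hlen
    | a :: b :: rest, hlen, hs =>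
      obtain rfl : b = GammaLetter.s := hs 1 (by simp) odd_one
      obtain ⟨h1, h2, h3⟩ := ih rest (by simp at hlen; omega)
        (fun i h hi => hs (i + 2) (by simpa using h) (hi.add_even even_two))
        (q + rho a * d + rho a * d) (p + rho a * d) (rho a * d)
      have hw : run (a :: GammaLetter.s :: rest) (q, d) =
          run rest (q + rho a * d + rho a * d, rho a * d) := by
        simp [run, turtleStep, rho]
      have hw' : run (oddExtract (a :: GammaLetter.s :: rest)) (p, d) =
          run (oddExtract rest) (p + rho a * d, rho a * d) := rfl
      rw [hw, hw']
      exact ⟨congrArg (· + 1) h1, h2, by linear_combination h3⟩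

/-- Let w have odd length 2k−1 with every letter at an even position (1-indexed)
equal to s, and let w' be the length-k word of letters of w at odd positions.
Then from any state (p, d) the runs of w and w' have the same final direction e,
and the final position of the run of w is 2·(final position of the run of w') − p − e. -/
theorem run_oddExtract (k : ℕ) (hk : 1 ≤ k) (w : List GammaLetter)
    (hlen : w.length = 2 * k - 1)
    (hs : ∀ (i : ℕ) (h : i < w.length), Odd i → w[i] = GammaLetter.s)
    (p d : ℂ) :
    (oddExtract w).length = k ∧
    (run w (p, d)).2 = (run (oddExtract w) (p, d)).2 ∧
    (run w (p, d)).1 =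
      2 * (run (oddExtract w) (p, d)).1 - p - (run (oddExtract w) (p, d)).2 := by
  obtain ⟨n, rfl⟩ := Nat.exists_eq_add_of_le' hk
  obtain ⟨h1, h2, h3⟩ := run_oddExtract_aux n w (by omega) hs p p d
  exact ⟨h1, h2, by linear_combination h3⟩
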